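/- The map U (the μ-a.e. limit of the Chacon-type maps U_n) is not strongly mixing. In fact, for the set A = [0,1/4)×[3/4,1) (so μ(A) = 1/16 and μ(A)² = 1/256), one has μ(U^{−(4^{k−1}−1)}(A) ∩ A) ≥ 1/64 for every k ≥ 3; hence μ(U^{−n}(A) ∩ A) does not converge to μ(A)² as n → ∞. -/

import Mathlib

/-!
The limit map is a cutting-and-stacking construction. At stage `n` the torus is cut into `4 ^ n`
dyadic squares of side `2⁻ⁿ`. All of them except the bottom right one (the spacer) are the levels
of one tower of height `4 ^ n - 1`, each level being translated onto the next. To pass to stage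
`n + 1`, the tower is cut into four subcolumns according to the quadrants of its levels, and these
are stacked in the order top left, top right, spacer, bottom left, spacer, bottom right, spacer.

No spacer is put between the top left and the top right subcolumns. Hence a point in the top left
quadrant of any level returns to that level after `4 ^ n - 1` steps, half a side to the right. Since
`[0, 1/4) × [3/4, 1)` is a level of stage `2`, hence a union of levels at every later stage, a
quarter of it, of measure `1/64`, returns to it at time `4 ^ n - 1` for all `n ≥ 2`; as
`1/64 > 1/256`, the correlations do not converge to the square of its measure.
-/

open MeasureTheory Filter Set
open scoped ENNReal symmDiff

noncomputable section

instance fact01 : Fact ((0:ℝ) < 1) := ⟨one_pos⟩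

/-- The two-dimensional torus `[0,1)²` with coordinatewise addition mod 1. -/
abbrev T2 : Type := AddCircle (1:ℝ) × AddCircle (1:ℝ)

/-- The canonical representative in `[0,1)` of a point of the circle. -/
noncomputable def rep (x : AddCircle (1:ℝ)) : ℝ := ((AddCircle.equivIco 1 0) x : ℝ)

/-- The point of the torus with coordinates `a`, `b` (mod 1). -/
noncomputable def tv (a b : ℝ) : T2 := ((a : AddCircle (1:ℝ)), (b : AddCircle (1:ℝ)))

open Classical in
/-- The Chacon-type maps `U_n` on the torus. -/
noncomputable def chaconU : ℕ → T2 → T2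
  | 0 => id
  | 1 => fun x =>
      if 0 ≤ rep x.1 ∧ rep x.1 < 1/2 ∧ 1/2 ≤ rep x.2 ∧ rep x.2 < 1 then x + tv (1/2) 0
      else if 1/2 ≤ rep x.1 ∧ rep x.1 < 1 ∧ 1/2 ≤ rep x.2 ∧ rep x.2 < 1 then
        x + tv (-(1/2)) (-(1/2))
      else if 0 ≤ rep x.1 ∧ rep x.1 < 1/2 ∧ 0 ≤ rep x.2 ∧ rep x.2 < 1/2 then x + tv 0 (1/2)
      else x
  | (n+2) => fun x =>
      let s : ℝ := 1 / 2 ^ (n+2)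
      let a := rep x.1
      let b := rep x.2
      if 1-4*s ≤ a ∧ a < 1-3*s ∧ s ≤ b ∧ b < 2*s then x + tv (5*s-1) (1-2*s)
      else if 1-3*s ≤ a ∧ a < 1-2*s ∧ s ≤ b ∧ b < 2*s then x + tv s 0
      else if 1-4*s ≤ a ∧ a < 1-3*s ∧ 0 ≤ b ∧ b < s then x + tv (3*s) s
      else if 1-3*s ≤ a ∧ a < 1-2*s ∧ 0 ≤ b ∧ b < s then x + tv s 0
      else if 1-2*s ≤ a ∧ a < 1 ∧ s ≤ b ∧ b < 2*s then x + tv (2*s-1) (1-3*s)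
      else if 1-2*s ≤ a ∧ a < 1-s ∧ 0 ≤ b ∧ b < s then x + tv (2*s-1) (1-s)
      else if 1-s ≤ a ∧ a < 1 ∧ 0 ≤ b ∧ b < s then x
      else chaconU (n+1) x

/-- An automorphism of the torus: measurable, bijective up to null sets with measurable
inverse, and measure-preserving. -/
def IsAutomorphism (U : T2 → T2) : Prop :=
  Measurable U ∧ ∃ V : T2 → T2, Measurable V ∧
    (∀ᵐ x ∂(volume : Measure T2), V (U x) = x) ∧
    (∀ᵐ x ∂(volume : Measure T2), U (V x) = x) ∧
    ∀ A : Set T2, MeasurableSet A → volume (U ⁻¹' A) = volume A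

/-! ### Translations and iterates -/

lemma measure_le_card_mul_of_subset_iUnion_preimage_add {G : Type*} [AddGroup G]
    [MeasurableSpace G] [MeasurableAdd G] {μ : Measure G} [μ.IsAddRightInvariant] {ι : Type*}
    [Fintype ι] {A E : Set G} (t : ι → G) (h : A ⊆ ⋃ i, (· + t i) ⁻¹' E) :
    μ A ≤ Fintype.card ι * μ E :=
  calc μ A ≤ ∑ i, μ ((· + t i) ⁻¹' E) := (measure_mono h).trans (measure_iUnion_fintype_le μ _)
    _ = Fintype.card ι * μ E := by simp [measure_preimage_add_right]

lemma iterate_ae_eq_of_tendsto_ae {α : Type*} [MeasurableSpace α] {μ : Measure α} {f g : α → α}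
    (hf : Tendsto f (ae μ) (ae μ)) (h : f =ᵐ[μ] g) (n : ℕ) : f^[n] =ᵐ[μ] g^[n] := by
  induction n with
  | zero => rfl
  | succ n ih =>
    filter_upwards [h, hf.eventually ih] with x hx hn
    rw [Function.iterate_succ_apply, Function.iterate_succ_apply, hn, hx]

lemma measure_iterate_preimage_inter_congr {α : Type*} [MeasurableSpace α] {μ : Measure α}
    {f g : α → α} (hf : Tendsto f (ae μ) (ae μ)) (h : f =ᵐ[μ] g) (n : ℕ) (A : Set α) :
    μ (f^[n] ⁻¹' A ∩ A) = μ (g^[n] ⁻¹' A ∩ A) :=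
  measure_congr (((iterate_ae_eq_of_tendsto_ae hf h n).preimage A).inter EventuallyEq.rfl)

/-- `f` maps the level `p + B` of a tower onto the level `q + B` by translation. -/
def Carries {G : Type*} [Add G] (f : G → G) (B : Set G) (p q : G) : Prop :=
  ∀ o ∈ B, f (p + o) = q + o

lemma Carries.add_right {G : Type*} [AddSemigroup G] {f : G → G} {B B' : Set G} {p q : G}
    (h : Carries f B p q) {t : G} (ht : ∀ o ∈ B', t + o ∈ B) :
    Carries f B' (p + t) (q + t) := fun o ho => by
  rw [add_assoc, add_assoc, h _ (ht o ho)]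

section Chain

variable {G : Type*} [Add G] {f : G → G} {B : Set G} {L : List G} {o : G}

lemma iterate_getElem_add_of_isChain (hL : L.IsChain (Carries f B)) (ho : o ∈ B) {i j : ℕ}
    (hij : i ≤ j) (hj : j < L.length) : f^[j - i] (L[i] + o) = L[j] + o := by
  induction j, hij using Nat.le_induction with
  | base => simp
  | succ j hij ih =>
    rw [Nat.succ_sub hij, Function.iterate_succ_apply', ih (by lia)]
    exact List.isChain_iff_getElem.1 hL j hj o ho

lemma iterate_length_add_of_isChain (hL : L.IsChain (Carries f B)) {o' : G} (ho : o ∈ B)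
    (ho' : o' ∈ B) (hback : ∀ z ∈ L.getLast?, ∀ b ∈ L.head?, f (z + o) = b + o') {p : G}
    (hp : p ∈ L) : f^[L.length] (p + o) = p + o' := by
  obtain ⟨i, hi, rfl⟩ := List.getElem_of_mem hp
  have climb : f^[L.length - 1 - i] (L[i] + o) = L[L.length - 1] + o :=
    iterate_getElem_add_of_isChain hL ho (by lia) (by lia)
  have wrap : f (L[L.length - 1] + o) = L[0] + o' :=
    hback _ (by simp [List.getLast?_eq_getElem?]) _ (by simp [List.head?_eq_getElem?])
  have climb_again : f^[i] (L[0] + o') = L[i] + o' :=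
    iterate_getElem_add_of_isChain hL ho' (Nat.zero_le i) hi
  rw [show L.length = i + (1 + (L.length - 1 - i)) by lia, Function.iterate_add_apply,
    Function.iterate_add_apply]
  simp [climb, wrap, climb_again]

end Chain

/-! ### Coordinates on the torus -/

lemma rep_nonneg (x : AddCircle (1 : ℝ)) : 0 ≤ rep x := (AddCircle.equivIco 1 0 x).2.1

lemma coe_rep (x : AddCircle (1 : ℝ)) : (rep x : AddCircle (1 : ℝ)) = x :=
  AddCircle.coe_equivIco

lemma rep_coe {a : ℝ} (ha : a ∈ Ico 0 1) : rep (a : AddCircle (1 : ℝ)) = a :=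
  AddCircle.equivIco_coe_of_mem (p := (1 : ℝ)) (a := 0) (by simpa using ha)

lemma measurable_rep : Measurable rep :=
  measurable_subtype_coe.comp (AddCircle.measurableEquivIco (1 : ℝ) 0).measurable

lemma measurePreserving_rep : MeasurePreserving rep volume (volume.restrict (Ico 0 1)) := by
  refine ⟨measurable_rep, ?_⟩
  have hmk : MeasurePreserving ((↑) : ℝ → AddCircle (1 : ℝ)) (volume.restrict (Ico 0 1)) := by
    simpa [restrict_Ico_eq_restrict_Ioc] using AddCircle.measurePreserving_mk (1 : ℝ) 0
  rw [← hmk.map_eq, Measure.map_map measurable_rep hmk.measurable]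
  refine (Measure.map_congr ?_).trans Measure.map_id
  filter_upwards [ae_restrict_mem measurableSet_Ico] with a ha using rep_coe ha

lemma volume_rep_lt {r : ℝ} (hr : r ≤ 1) :
    volume {x : AddCircle (1 : ℝ) | rep x < r} = ENNReal.ofReal r := by
  rw [show {x : AddCircle (1 : ℝ) | rep x < r} = rep ⁻¹' Iio r from rfl,
    measurePreserving_rep.measure_preimage measurableSet_Iio.nullMeasurableSet,
    Measure.restrict_apply measurableSet_Iio, inter_comm, Ico_inter_Iio, min_eq_right hr,
    Real.volume_Ico, sub_zero]

lemma tv_add (a b c d : ℝ) : tv a b + tv c d = tv (a + c) (b + d) := by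
  simp [tv]

lemma tv_rep (x : T2) : tv (rep x.1) (rep x.2) = x := by
  simp [tv, coe_rep]

/-! ### Dyadic squares -/

/-- The side of the squares of stage `n`. -/
def sideLength (n : ℕ) : ℝ := 1 / 2 ^ n

lemma sideLength_pos (n : ℕ) : 0 < sideLength n := by unfold sideLength; positivity

lemma sideLength_eq_two_mul (n : ℕ) : sideLength n = 2 * sideLength (n + 1) := by
  unfold sideLength; rw [pow_succ]; field_simp

lemma sideLength_antitone : Antitone sideLength := fun _ _ h =>
  one_div_le_one_div_of_le (by positivity) (pow_le_pow_right₀ one_le_two h)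

lemma sideLength_le_one (n : ℕ) : sideLength n ≤ 1 := by
  simpa [sideLength] using sideLength_antitone (Nat.zero_le n)

/-- The square `[0, 2⁻ⁿ)²`, to which the offset of a point from the lower left corner of its stage
`n` square belongs. -/
def box (n : ℕ) : Set T2 := {o | rep o.1 < sideLength n ∧ rep o.2 < sideLength n}

lemma tv_mem_box {n : ℕ} {u v : ℝ} (hu : u ∈ Ico 0 (sideLength n))
    (hv : v ∈ Ico 0 (sideLength n)) : tv u v ∈ box n := by
  have h := sideLength_le_one n
  simp only [box, tv, mem_ofPred_eq, rep_coe ⟨hu.1, hu.2.trans_le h⟩,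
    rep_coe ⟨hv.1, hv.2.trans_le h⟩]
  exact ⟨hu.2, hv.2⟩

lemma mem_box_iff {n : ℕ} {o : T2} :
    o ∈ box n ↔ ∃ u ∈ Ico 0 (sideLength n), ∃ v ∈ Ico 0 (sideLength n), o = tv u v := by
  constructor
  · exact fun ho => ⟨_, ⟨rep_nonneg _, ho.1⟩, _, ⟨rep_nonneg _, ho.2⟩, (tv_rep o).symm⟩
  · rintro ⟨u, hu, v, hv, rfl⟩
    exact tv_mem_box hu hv

lemma volume_box (n : ℕ) : volume (box n) = ENNReal.ofReal (sideLength n ^ 2) := by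
  have h : box n = {x : AddCircle (1 : ℝ) | rep x < sideLength n} ×ˢ
    {x : AddCircle (1 : ℝ) | rep x < sideLength n} := rfl
  rw [h, Measure.volume_eq_prod, Measure.prod_prod, volume_rep_lt (sideLength_le_one n), sq,
    ENNReal.ofReal_mul (sideLength_pos n).le]

/-- The stage `n` square with lower left corner `p`. -/
def square (n : ℕ) (p : T2) : Set T2 := (p + ·) '' box n

instance : (volume : Measure T2).IsAddLeftInvariant :=
  inferInstanceAs (Measure.prod volume volume).IsAddLeftInvariant

lemma volume_square (n : ℕ) (p : T2) :
    volume (square n p) = ENNReal.ofReal (sideLength n ^ 2) := by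
  rw [square, image_add_left, measure_preimage_add, volume_box]

lemma square_tv {n : ℕ} {a b : ℝ} (ha : 0 ≤ a) (ha' : a + sideLength n ≤ 1) (hb : 0 ≤ b)
    (hb' : b + sideLength n ≤ 1) :
    square n (tv a b) = {x | a ≤ rep x.1 ∧ rep x.1 < a + sideLength n ∧
      b ≤ rep x.2 ∧ rep x.2 < b + sideLength n} := by
  ext x
  simp only [square, mem_image, mem_box_iff, mem_ofPred_eq]
  constructor
  · rintro ⟨_, ⟨u, hu, v, hv, rfl⟩, rfl⟩
    rw [tv_add, tv, rep_coe (by grind), rep_coe (by grind)]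
    grind
  · rintro ⟨hax, hxa, hby, hyb⟩
    refine ⟨_, ⟨rep x.1 - a, by grind, rep x.2 - b, by grind, rfl⟩, ?_⟩
    rw [tv_add, add_sub_cancel, add_sub_cancel, tv_rep]

/-- The offset of a quadrant of a stage `n` square from its lower left corner: `i = 0` is left,
`j = 0` is bottom. -/
def quadrant (n : ℕ) (i j : Fin 2) : T2 :=
  tv (i * sideLength (n + 1)) (j * sideLength (n + 1))

lemma fin_two_mul_add_mem_Ico {s u : ℝ} (i : Fin 2) (hu : u ∈ Ico 0 s) :
    i * s + u ∈ Ico 0 (2 * s) := by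
  fin_cases i <;> simp only [Nat.cast_zero, Nat.cast_one] <;> grind

lemma quadrant_add_mem_box {n : ℕ} (i j : Fin 2) {o : T2} (ho : o ∈ box (n + 1)) :
    quadrant n i j + o ∈ box n := by
  obtain ⟨u, hu, v, hv, rfl⟩ := mem_box_iff.1 ho
  rw [quadrant, tv_add]
  apply tv_mem_box <;> rw [sideLength_eq_two_mul n] <;> exact fin_two_mul_add_mem_Ico _ ‹_›

lemma exists_fin_two_mul_add {s u : ℝ} (hu : u ∈ Ico 0 (2 * s)) :
    ∃ i : Fin 2, ∃ u' ∈ Ico 0 s, u = i * s + u' := by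
  rcases lt_or_ge u s with h | h
  · exact ⟨0, u, ⟨hu.1, h⟩, by simp⟩
  · exact ⟨1, u - s, by grind, by simp⟩

lemma exists_quadrant_add {n : ℕ} {o : T2} (ho : o ∈ box n) :
    ∃ i j, ∃ o' ∈ box (n + 1), o = quadrant n i j + o' := by
  obtain ⟨u, hu, v, hv, rfl⟩ := mem_box_iff.1 ho
  rw [sideLength_eq_two_mul] at hu hv
  obtain ⟨i, u', hu', rfl⟩ := exists_fin_two_mul_add hu
  obtain ⟨j, v', hv', rfl⟩ := exists_fin_two_mul_add hv
  exact ⟨i, j, _, tv_mem_box hu' hv', by rw [quadrant, tv_add]⟩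

/-! ### The limit map -/

/-- `x` lies outside the rectangle `[1 - 2s, 1) × [0, s)`, `s = 2⁻ⁿ`, the union of the top of the
stage `n` tower and the spacer. For `n ≥ 1` this rectangle contains all points where `U_{n+1}` and
`U_n` differ. -/
def IsSettled (n : ℕ) (x : T2) : Prop :=
  rep x.1 < 1 - 2 * sideLength n ∨ sideLength n ≤ rep x.2

lemma IsSettled.mono {m n : ℕ} {x : T2} (h : IsSettled m x) (hmn : m ≤ n) : IsSettled n x := by
  have := sideLength_antitone hmn
  unfold IsSettled at *
  grind

lemma IsSettled.chaconU_succ {n : ℕ} {x : T2} (h : IsSettled (n + 1) x) :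
    chaconU (n + 2) x = chaconU (n + 1) x := by
  have hpos := sideLength_pos (n + 2)
  rw [IsSettled, sideLength_eq_two_mul] at h
  rw [chaconU, ← sideLength]
  grind

lemma IsSettled.chaconU_eq {m n : ℕ} {x : T2} (h : IsSettled (m + 1) x) (hmn : m + 1 ≤ n) :
    chaconU n x = chaconU (m + 1) x := by
  induction n, hmn using Nat.le_induction with
  | base => rfl
  | succ n hn ih =>
    obtain ⟨n, rfl⟩ := Nat.exists_eq_add_of_le' (Nat.one_le_of_lt hn)
    rw [(h.mono hn).chaconU_succ, ih]

/-- The pointwise limit of the `U_n`. It is the only value that `U_n x` eventually takes where this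
sequence is eventually constant, and may be junk elsewhere. -/
def chaconLimit (x : T2) : T2 := limUnder atTop fun n => chaconU n x

lemma chaconLimit_eq_of_eventually_eq {x y : T2} (h : ∀ᶠ n in atTop, chaconU n x = y) :
    chaconLimit x = y :=
  (tendsto_const_nhds.congr' (h.mono fun _ => Eq.symm)).limUnder_eq

lemma IsSettled.chaconLimit_eq {n : ℕ} {x : T2} (h : IsSettled (n + 1) x) :
    chaconLimit x = chaconU (n + 1) x :=
  chaconLimit_eq_of_eventually_eq <|
    (eventually_ge_atTop (n + 1)).mono fun _ hm => h.chaconU_eq hm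

/-- The corner of the top left stage `n` square, the lowest level of the stage `n` tower. -/
def towerBase (n : ℕ) : T2 := tv 0 (1 - sideLength n)

/-- The corner of the highest level of the stage `n` tower, to the left of the spacer. -/
def towerTop (n : ℕ) : T2 := tv (1 - 2 * sideLength n) 0

/-- The corner of the bottom right stage `n` square, the only one outside the stage `n` tower. -/
def spacer (n : ℕ) : T2 := tv (1 - sideLength n) 0

lemma chaconLimit_tv_of_upper {a b : ℝ} (ha : a ∈ Ico 0 1) (hb : b ∈ Ico (1 / 2) 1) :
    chaconLimit (tv a b) =
      tv a b + if a < 1 / 2 then tv (1 / 2) 0 else tv (-(1 / 2)) (-(1 / 2)) := by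
  have ha' : rep (tv a b).1 = a := rep_coe ha
  have hb' : rep (tv a b).2 = b := rep_coe (by grind)
  have settled : IsSettled 1 (tv a b) := by right; rw [hb', sideLength]; grind
  rw [settled.chaconLimit_eq, chaconU]
  simp only [ha', hb']
  grind

lemma chaconLimit_tv {n : ℕ} {s a b : ℝ} (hs : s = sideLength (n + 2)) (ha : a ∈ Ico (1 - 4 * s) 1)
    (hb : b ∈ Ico 0 (2 * s)) (h : a < 1 - 2 * s ∨ s ≤ b) :
    chaconLimit (tv a b) = tv a b +
      if 1 - 2 * s ≤ a then tv (2 * s - 1) (1 - 3 * s)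
      else if 1 - 3 * s ≤ a then tv s 0
      else if s ≤ b then tv (5 * s - 1) (1 - 2 * s) else tv (3 * s) s := by
  have hs4 : 4 * s ≤ 1 := by
    have := sideLength_le_one n
    rw [sideLength_eq_two_mul, sideLength_eq_two_mul, ← hs] at this
    grind
  have ha' : rep (tv a b).1 = a := rep_coe (by grind)
  have hb' : rep (tv a b).2 = b := rep_coe (by grind)
  have settled : IsSettled (n + 2) (tv a b) := by rwa [IsSettled, ← hs, ha', hb']
  have hs' : 1 / 2 ^ (n + 2) = s := hs.symm
  rw [settled.chaconLimit_eq, chaconU]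
  simp only [ha', hb', hs']
  grind

lemma carries_tv_iff {f : T2 → T2} {n : ℕ} {a b c d : ℝ} :
    Carries f (box n) (tv a b) (tv c d) ↔ ∀ u ∈ Ico 0 (sideLength n), ∀ v ∈ Ico 0 (sideLength n),
      f (tv (a + u) (b + v)) = tv (c + u) (d + v) := by
  simp only [← tv_add]
  exact ⟨fun h u hu v hv => h _ (tv_mem_box hu hv), fun h o ho => by
    obtain ⟨u, hu, v, hv, rfl⟩ := mem_box_iff.1 ho
    exact h u hu v hv⟩

section Junctions

variable (n : ℕ)

lemma towerTop_add_quadrant (i j : Fin 2) : towerTop n + quadrant n i j =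
    tv (1 - 4 * sideLength (n + 1) + i * sideLength (n + 1)) (j * sideLength (n + 1)) := by
  rw [towerTop, quadrant, tv_add, sideLength_eq_two_mul n, zero_add]
  congr 1; ring

lemma spacer_add_quadrant (i j : Fin 2) : spacer n + quadrant n i j =
    tv (1 - 2 * sideLength (n + 1) + i * sideLength (n + 1)) (j * sideLength (n + 1)) := by
  rw [spacer, quadrant, tv_add, sideLength_eq_two_mul n, zero_add]

lemma towerBase_add_quadrant (i j : Fin 2) : towerBase n + quadrant n i j =
    tv (i * sideLength (n + 1)) (1 - 2 * sideLength (n + 1) + j * sideLength (n + 1)) := by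
  rw [towerBase, quadrant, tv_add, sideLength_eq_two_mul n, zero_add]

lemma carries_towerTop_upper_left : Carries chaconLimit (box (n + 2))
    (towerTop (n + 1) + quadrant (n + 1) 0 1) (towerBase (n + 1) + quadrant (n + 1) 1 1) := by
  rw [towerTop_add_quadrant, towerBase_add_quadrant, carries_tv_iff]
  simp only [Fin.val_zero, Fin.val_one, Nat.cast_zero, Nat.cast_one]
  intro u hu v hv
  rw [chaconLimit_tv (n := n) rfl (by grind) (by grind) (by grind),
    if_neg (by grind), if_neg (by grind), if_pos (by grind), tv_add]
  congr 1 <;> ring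

lemma carries_towerTop_lower_left : Carries chaconLimit (box (n + 2))
    (towerTop (n + 1) + quadrant (n + 1) 0 0) (spacer (n + 1) + quadrant (n + 1) 1 1) := by
  rw [towerTop_add_quadrant, spacer_add_quadrant, carries_tv_iff]
  simp only [Fin.val_zero, Fin.val_one, Nat.cast_zero, Nat.cast_one]
  intro u hu v hv
  rw [chaconLimit_tv (n := n) rfl (by grind) (by grind) (by grind),
    if_neg (by grind), if_neg (by grind), if_neg (by grind), tv_add]
  congr 1 <;> ring

lemma carries_towerTop_right (j : Fin 2) : Carries chaconLimit (box (n + 2))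
    (towerTop (n + 1) + quadrant (n + 1) 1 j) (spacer (n + 1) + quadrant (n + 1) 0 j) := by
  rw [towerTop_add_quadrant, spacer_add_quadrant, carries_tv_iff]
  simp only [Fin.val_zero, Fin.val_one, Nat.cast_zero, Nat.cast_one]
  intro u hu v hv
  have := fin_two_mul_add_mem_Ico j hv
  rw [chaconLimit_tv (n := n) rfl (by grind) (by grind) (by grind),
    if_neg (by grind), if_pos (by grind), tv_add]
  congr 1 <;> ring

lemma carries_spacer_upper (i : Fin 2) : Carries chaconLimit (box (n + 2))
    (spacer (n + 1) + quadrant (n + 1) i 1) (towerBase (n + 1) + quadrant (n + 1) i 0) := by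
  rw [spacer_add_quadrant, towerBase_add_quadrant, carries_tv_iff]
  simp only [Fin.val_zero, Fin.val_one, Nat.cast_zero, Nat.cast_one]
  intro u hu v hv
  have := fin_two_mul_add_mem_Ico i hu
  rw [chaconLimit_tv (n := n) rfl (by grind) (by grind) (by grind),
    if_pos (by grind), tv_add]
  congr 1 <;> ring

end Junctions

/-! ### The towers -/

/-- The corners of the levels of the stage `n` tower, from bottom to top. At stage `0` the tower is
empty and the spacer is the whole torus, so that stage `1` is an instance of the recursion. -/
def tower : ℕ → List T2
  | 0 => []
  | n + 1 =>
      (tower n).map (· + quadrant n 0 1) ++ (tower n).map (· + quadrant n 1 1) ++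
        (spacer n + quadrant n 0 1) :: (tower n).map (· + quadrant n 0 0) ++
        (spacer n + quadrant n 1 1) :: (tower n).map (· + quadrant n 1 0) ++
        [spacer n + quadrant n 0 0]

lemma length_tower (n : ℕ) : (tower n).length = 4 ^ n - 1 := by
  induction n with
  | zero => rfl
  | succ n ih =>
    have := Nat.one_le_pow n 4 (by lia)
    simp only [tower, List.length_append, List.length_map, List.length_cons, List.length_nil, ih]
    lia

lemma head?_tower (n : ℕ) : (tower (n + 1)).head? = some (towerBase (n + 1)) := by
  induction n with
  | zero => norm_num [tower, spacer_add_quadrant, towerBase, sideLength]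
  | succ n ih =>
    have bottom : towerBase (n + 1) + quadrant (n + 1) 0 1 = towerBase (n + 2) := by
      rw [towerBase_add_quadrant, towerBase]
      simp only [Fin.val_zero, Fin.val_one, Nat.cast_zero, Nat.cast_one]
      congr 1 <;> ring
    rw [tower]
    simp [ih, bottom]

lemma getLast?_tower (n : ℕ) : (tower (n + 1)).getLast? = some (towerTop (n + 1)) := by
  rw [tower, List.getLast?_concat, spacer_add_quadrant, towerTop]
  simp

lemma add_quadrant_mem_tower {n : ℕ} {p : T2} (hp : p ∈ tower n) (i j : Fin 2) :
    p + quadrant n i j ∈ tower (n + 1) := by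
  fin_cases i <;> fin_cases j <;> simp [tower, hp]

lemma isChain_tower_one : (tower 1).IsChain (Carries chaconLimit (box 1)) := by
  have half : sideLength 1 = 1 / 2 := by norm_num [sideLength]
  have tower_one : tower 1 = [tv 0 (1 / 2), tv (1 / 2) (1 / 2), tv 0 0] := by
    norm_num [tower, spacer_add_quadrant, half]
  simp only [tower_one, List.isChain_cons_cons, List.isChain_singleton, and_true, carries_tv_iff,
    half]
  refine ⟨fun u hu v hv => ?_, fun u hu v hv => ?_⟩
  · rw [chaconLimit_tv_of_upper (by grind) (by grind), if_pos (by grind), tv_add]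
    congr 1 <;> ring
  · rw [chaconLimit_tv_of_upper (by grind) (by grind), if_neg (by grind), tv_add]
    congr 1 <;> ring

lemma isChain_tower (n : ℕ) : (tower n).IsChain (Carries chaconLimit (box n)) := by
  induction n with
  | zero => simp [tower]
  | succ n ih =>
    rcases n with _ | n
    · exact isChain_tower_one
    · have subcolumn (i j : Fin 2) : ((tower (n + 1)).map (· + quadrant (n + 1) i j)).IsChain
          (Carries chaconLimit (box (n + 2))) :=
        List.isChain_map_of_isChain _
          (fun _ _ h => h.add_right fun _ ho => quadrant_add_mem_box i j ho) ih
      rw [tower]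
      simp [List.isChain_append, List.isChain_cons, subcolumn, head?_tower, getLast?_tower,
        carries_towerTop_upper_left, carries_towerTop_lower_left, carries_towerTop_right,
        carries_spacer_upper]

/-! ### Return to a level -/

lemma square_add_quadrant_subset (n : ℕ) (p : T2) (i j : Fin 2) :
    square (n + 1) (p + quadrant n i j) ⊆ square n p := by
  rintro _ ⟨o, ho, rfl⟩
  exact ⟨_, quadrant_add_mem_box i j ho, (add_assoc p _ o).symm⟩

lemma exists_mem_square_add_quadrant {n : ℕ} {p x : T2} (hx : x ∈ square n p) :
    ∃ i j, x ∈ square (n + 1) (p + quadrant n i j) := by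
  obtain ⟨_, hbox, rfl⟩ := hx
  obtain ⟨i, j, o, ho, rfl⟩ := exists_quadrant_add hbox
  exact ⟨i, j, o, ho, add_assoc p _ o⟩

lemma exists_mem_tower_square_subset {m n : ℕ} (hmn : m ≤ n) {p x : T2} (hp : p ∈ tower m)
    (hx : x ∈ square m p) : ∃ q ∈ tower n, x ∈ square n q ∧ square n q ⊆ square m p := by
  induction n, hmn using Nat.le_induction with
  | base => exact ⟨p, hp, hx, Subset.rfl⟩
  | succ n _ ih =>
    obtain ⟨q, hq, hxq, hqp⟩ := ih
    obtain ⟨i, j, hxij⟩ := exists_mem_square_add_quadrant hxq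
    exact ⟨_, add_quadrant_mem_tower hq i j, hxij, (square_add_quadrant_subset n q i j).trans hqp⟩

lemma chaconLimit_iterate_upper_left {n : ℕ} {p o : T2} (hp : p ∈ tower (n + 1))
    (ho : o ∈ box (n + 2)) : chaconLimit^[4 ^ (n + 1) - 1] (p + (quadrant (n + 1) 0 1 + o)) =
      p + (quadrant (n + 1) 1 1 + o) := by
  rw [← length_tower]
  refine iterate_length_add_of_isChain (isChain_tower (n + 1)) (quadrant_add_mem_box 0 1 ho)
    (quadrant_add_mem_box 1 1 ho) ?_ hp
  simpa [head?_tower, getLast?_tower, add_assoc] using carries_towerTop_upper_left n o ho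

-- Every quadrant of a stage `n + 1` level is a translate of its top left quadrant, which returns.
lemma square_subset_iUnion_preimage_add {m n : ℕ} (hmn : m ≤ n + 1) {p : T2} (hp : p ∈ tower m) :
    square m p ⊆ ⋃ ij : Fin 2 × Fin 2,
      (· + (quadrant (n + 1) 0 1 - quadrant (n + 1) ij.1 ij.2)) ⁻¹'
        (chaconLimit^[4 ^ (n + 1) - 1] ⁻¹' square m p ∩ square m p) := by
  intro x hx
  obtain ⟨q, hq, hxq, hqp⟩ := exists_mem_tower_square_subset hmn hp hx
  obtain ⟨i, j, o, ho, rfl⟩ := exists_mem_square_add_quadrant hxq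
  refine mem_iUnion.2 ⟨(i, j), ?_⟩
  have translate : q + quadrant (n + 1) i j + o + (quadrant (n + 1) 0 1 - quadrant (n + 1) i j) =
      q + (quadrant (n + 1) 0 1 + o) := by abel
  rw [mem_preimage, translate, mem_inter_iff, mem_preimage, chaconLimit_iterate_upper_left hq ho]
  exact ⟨hqp ⟨_, quadrant_add_mem_box 1 1 ho, rfl⟩, hqp ⟨_, quadrant_add_mem_box 0 1 ho, rfl⟩⟩

lemma volume_square_div_four_le {m n : ℕ} (hmn : m ≤ n + 1) {p : T2} (hp : p ∈ tower m) :
    volume (square m p) / 4 ≤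
      volume (chaconLimit^[4 ^ (n + 1) - 1] ⁻¹' square m p ∩ square m p) := by
  refine ENNReal.div_le_of_le_mul' ?_
  simpa using measure_le_card_mul_of_subset_iUnion_preimage_add (μ := (volume : Measure T2)) _
    (square_subset_iUnion_preimage_add hmn hp)

lemma IsAutomorphism.measurePreserving {U : T2 → T2} (hU : IsAutomorphism U) :
    MeasurePreserving U volume volume := by
  obtain ⟨hmeas, -, -, -, -, hpres⟩ := hU
  exact ⟨hmeas, Measure.ext fun A hA => by rw [Measure.map_apply hmeas hA, hpres A hA]⟩

lemma ae_eq_chaconLimit {U : T2 → T2}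
    (hlim : ∀ᵐ x ∂(volume : Measure T2), ∃ N : ℕ, ∀ n, N ≤ n → chaconU n x = U x) :
    U =ᵐ[volume] chaconLimit :=
  hlim.mono fun _ hx => (chaconLimit_eq_of_eventually_eq (eventually_atTop.2 hx)).symm

lemma towerBase_mem_tower (n : ℕ) : towerBase (n + 1) ∈ tower (n + 1) :=
  List.mem_of_mem_head? (head?_tower n)

lemma square_two_towerBase : square 2 (towerBase 2) =
    {x : T2 | 0 ≤ rep x.1 ∧ rep x.1 < 1 / 4 ∧ 3 / 4 ≤ rep x.2 ∧ rep x.2 < 1} := by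
  rw [towerBase, square_tv] <;> norm_num [sideLength]

lemma volume_square_two (p : T2) : volume (square 2 p) = 1 / 16 := by
  rw [volume_square, show sideLength 2 ^ 2 = 1 / 16 by norm_num [sideLength],
    ENNReal.ofReal_div_of_pos (by norm_num)]
  norm_num

lemma tendsto_four_pow_sub_one : Tendsto (fun k : ℕ => 4 ^ (k - 1) - 1) atTop atTop := by
  refine tendsto_atTop_mono (fun k => ?_) (tendsto_sub_atTop_nat 1)
  have := Nat.lt_pow_self (show 1 < 4 by norm_num) (n := k - 1)
  lia

/-- The a.e. limit `U` of the Chacon-type maps is not strongly mixing: for the square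
`A = [0,1/4) × [3/4,1)` (of measure `1/16`), `μ(U^{-(4^{k-1}-1)}(A) ∩ A) ≥ 1/64` for all
`k ≥ 3`, hence `μ(U^{-n}(A) ∩ A)` does not converge to `μ(A)² = 1/256`. -/
theorem chacon_not_strongly_mixing (U : T2 → T2)
    (hU : IsAutomorphism U)
    (hlim : ∀ᵐ x ∂(volume : Measure T2), ∃ N : ℕ, ∀ n, N ≤ n → chaconU n x = U x)
    (A : Set T2)
    (hA : A = {x : T2 | 0 ≤ rep x.1 ∧ rep x.1 < 1/4 ∧ 3/4 ≤ rep x.2 ∧ rep x.2 < 1}) :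
    volume A = 1/16 ∧ (volume A) ^ 2 = 1/256 ∧
    (∀ k : ℕ, 3 ≤ k → (1/64 : ℝ≥0∞) ≤ volume (U^[4 ^ (k-1) - 1] ⁻¹' A ∩ A)) ∧
    ¬ Tendsto (fun n : ℕ => volume (U^[n] ⁻¹' A ∩ A)) atTop (nhds ((volume A) ^ 2)) := by
  rw [← square_two_towerBase] at hA
  have volume_A : volume A = 1 / 16 := hA ▸ volume_square_two _
  have volume_A_sq : volume A ^ 2 = 1 / 256 := by
    rw [volume_A]
    norm_num [one_div, ← ENNReal.inv_pow]
  have returns (k : ℕ) (hk : 3 ≤ k) : 1 / 64 ≤ volume (U^[4 ^ (k - 1) - 1] ⁻¹' A ∩ A) := by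
    obtain ⟨n, rfl⟩ := Nat.exists_eq_add_of_le' (Nat.le_of_succ_le hk)
    calc 1 / 64 = volume A / 4 := by
          rw [volume_A, one_div, one_div, div_eq_mul_inv, ← ENNReal.mul_inv] <;> norm_num
      _ ≤ volume (chaconLimit^[4 ^ (n + 1) - 1] ⁻¹' A ∩ A) :=
          hA ▸ volume_square_div_four_le (by lia) (towerBase_mem_tower 1)
      _ = volume (U^[4 ^ (n + 1) - 1] ⁻¹' A ∩ A) := (measure_iterate_preimage_inter_congr
          hU.measurePreserving.quasiMeasurePreserving.tendsto_ae (ae_eq_chaconLimit hlim) _ A).symm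
  refine ⟨volume_A, volume_A_sq, returns, fun hT => ?_⟩
  have eventually_lt : ∀ᶠ k in atTop, volume (U^[4 ^ (k - 1) - 1] ⁻¹' A ∩ A) < 1 / 64 :=
    (hT.comp tendsto_four_pow_sub_one).eventually_lt_const <| by
      rw [volume_A_sq]
      norm_num [ENNReal.inv_lt_inv]
  obtain ⟨k, hlt, hk⟩ := (eventually_lt.and (eventually_ge_atTop 3)).exists
  exact (returns k hk).not_gt hlt

end
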